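/- Let T > 0 and x be reals with 2T/3 < x < T, and let f : ℝ → Bool be the clock signal with period T and high time x, i.e. f(t) = true iff t − T·⌊t/T⌋ ∈ [0, x). Define g(t) = ¬(f(t) ∧ ¬f(t − T/3)). Then g is periodic with period T and is false exactly on [x − 2T/3, T/3) modulo T. In particular, the low interval of the first pulse-shaper stage begins x − 2T/3 > 0 time units after the rising edge of the input pulse (rather than at the rising edge) and lasts only T − x < T/3 time units. -/

import Mathlib

/-- The floor of `t / T` is the integer `n` for which `t` lies in `[T * n, T * n + T)`. -/
theorem floor_div_eq_of_sub_mem_Ico {T t : ℝ} (hT : 0 < T) {n : ℤ}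
    (h : t - T * n ∈ Set.Ico 0 T) : ⌊t / T⌋ = n := by
  obtain ⟨h0, h1⟩ := h
  rw [Int.floor_eq_iff, le_div_iff₀ hT, div_lt_iff₀ hT]
  constructor <;> linarith

theorem sub_mul_floor_div_mem_Ico {T : ℝ} (hT : 0 < T) (t : ℝ) :
    t - T * (⌊t / T⌋ : ℝ) ∈ Set.Ico 0 T := by
  have h0 := (le_div_iff₀ hT).1 (Int.floor_le (t / T))
  have h1 := (div_lt_iff₀ hT).1 (Int.lt_floor_add_one (t / T))
  constructor <;> linarith

/-- flawed behavior of the first pulse-shaper stage when the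
input high time satisfies `2T/3 < x < T`: `g` is periodic with period `T` and
low exactly on `[x - 2T/3, T/3)` modulo `T`; in particular the low interval
begins `x - 2T/3 > 0` after the rising edge and lasts only `T - x < T/3`. -/
theorem pulse_shaper_stage1_flaw
    (T x : ℝ) (hT : 0 < T) (hx1 : 2 * T / 3 < x) (hx2 : x < T)
    (f : ℝ → Bool)
    (hf : ∀ t : ℝ, f t = true ↔ t - T * (⌊t / T⌋ : ℝ) ∈ Set.Ico (0 : ℝ) x)
    (g : ℝ → Bool)
    (hg : ∀ t : ℝ, g t = !(f t && !(f (t - T / 3)))) :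
    (∀ t : ℝ, g (t + T) = g t) ∧
    (∀ t : ℝ, g t = false ↔
      t - T * (⌊t / T⌋ : ℝ) ∈ Set.Ico (x - 2 * T / 3) (T / 3)) ∧
    0 < x - 2 * T / 3 ∧ T - x < T / 3 := by
  have low : ∀ t : ℝ, g t = false ↔
      t - T * (⌊t / T⌋ : ℝ) ∈ Set.Ico (x - 2 * T / 3) (T / 3) := by
    intro t
    have hgt : g t = false ↔ f t = true ∧ ¬ f (t - T / 3) = true := by simp [hg]
    rw [hgt, hf, hf]
    obtain ⟨h0, h1⟩ := sub_mul_floor_div_mem_Ico hT t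
    rcases lt_or_ge (t - T * (⌊t / T⌋ : ℝ)) (T / 3) with h | h
    · have hfloor : ⌊(t - T / 3) / T⌋ = ⌊t / T⌋ - 1 := by
        apply floor_div_eq_of_sub_mem_Ico hT
        push_cast
        constructor <;> linarith
      rw [hfloor]
      push_cast
      simp only [Set.mem_Ico, not_and, not_lt]
      constructor
      · rintro ⟨-, h2⟩
        have := h2 (by linarith)
        constructor <;> linarith
      · rintro ⟨h2, -⟩
        exact ⟨⟨h0, by linarith⟩, fun _ => by linarith⟩
    · have hfloor : ⌊(t - T / 3) / T⌋ = ⌊t / T⌋ := by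
        apply floor_div_eq_of_sub_mem_Ico hT
        constructor <;> linarith
      rw [hfloor]
      constructor
      · rintro ⟨-, h2⟩
        exact absurd ⟨by linarith, by linarith⟩ h2
      · rintro ⟨-, h2⟩
        linarith
  refine ⟨fun t => ?_, low, by linarith, by linarith⟩
  have hshift : t + T - T * (⌊(t + T) / T⌋ : ℝ) = t - T * (⌊t / T⌋ : ℝ) := by
    rw [add_div, div_self hT.ne', Int.floor_add_one]
    push_cast
    ring
  have hiff : g (t + T) = false ↔ g t = false := by rw [low, low, hshift]
  rw [Bool.eq_iff_iff, ← Bool.not_eq_false, ← Bool.not_eq_false, hiff]
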